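/- Pointwise Generalization via Ghost Sample (Theorem: swap-invariant priors). There is an absolute constant C > 0 with the following property. Let ℓ : F × Z → [0,1] be jointly measurable, and let S = (z_1,…,z_n) and S' = (z'_1,…,z'_n) be mutually independent i.i.d. samples from a probability measure P on Z. Let (S,S') ↦ π_{(S,S')} be a measurable assignment of probability measures on F that is swap-invariant: π_{(S,S')} = π_{τ_i(S,S')} for every i ∈ {1,…,n}, where τ_i(S,S') exchanges z_i and z'_i. Then for every δ ∈ (0,1), with probability at least 1 − δ over (S,S'), simultaneously for every f ∈ F: (1/n)Σ_{i=1}^n ℓ(f;z'_i) − (1/n)Σ_{i=1}^n ℓ(f;z_i) ≤ C · ( inf_{α ≥ 0} { α + (1/√n) ∫_α^{√2} √( log(1/π_{(S,S')}(B_{ρ_{(S,S'),ℓ}}(f,ε))) ) dε } + √( log(log(2n)/δ)/n ) ), where all displayed suprema, infima and integrands are assumed measurable. -/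

import Mathlib

open MeasureTheory
open scoped ENNReal NNReal

noncomputable section

/-- The pointwise dimension `log(1/p)` of a (probability) mass `p`, valued in `[0,∞]`,
with the convention `log(1/0) = ∞`. -/
def negLog (p : ℝ≥0∞) : ℝ≥0∞ :=
  if p = 0 then ⊤ else ENNReal.ofReal (Real.log (1 / p.toReal))

/-- Ball of radius `ε` around `f` for a (semi-)metric `ρ`. -/
def mball {F : Type*} (ρ : F → F → ℝ) (f : F) (ε : ℝ) : Set F := {f' | ρ f f' ≤ ε}

/-- The mixed empirical–ghost metric
`ρ_{(S,S'),ℓ}(f₁,f₂) = √((1/n) Σᵢ [(ℓ f₁ zᵢ − ℓ f₂ zᵢ)² + (ℓ f₁ z'ᵢ − ℓ f₂ z'ᵢ)²])`. -/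
def mixedMetric {F Z : Type*} {n : ℕ} (ℓ : F → Z → ℝ) (S S' : Fin n → Z)
    (f₁ f₂ : F) : ℝ :=
  Real.sqrt ((∑ i, ((ℓ f₁ (S i) - ℓ f₂ (S i)) ^ 2 + (ℓ f₁ (S' i) - ℓ f₂ (S' i)) ^ 2)) / n)

/-!
Swapping coordinates changes neither the law of `(S, S')` nor the prior, so it suffices to fix
`(S, S')` and to prove the bound for a proportion `1 - δ` of the `2 ^ n` swaps. A swap acts on the
generalization gap of `f` by signs: the gap is the inner product of a sign vector with a vector
`v f`, and `v` is a contraction from the mixed metric to Euclidean distance. This reduces the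
theorem to a chaining bound for the linear functionals `⟪σ, ·⟫`, `σ` a random sign vector.

Instead of approximating a point by nets, average over the balls of radius `2 ^ (-k)` around it with
respect to the prior. Such averages are uniform over all points at once: Jensen's inequality bounds
the difference of two consecutive ones by the square root of the logarithm of a square-exponential
moment, which does not depend on the point, over the masses of the two balls. Only about `log (2 n)`
scales matter, so Markov's inequality makes all these moments at most of order `log (2 n) / δ` at
the same time, and the masses sum up to the entropy integral.

The confidence term stays bounded away from zero except when `n = 1` and `δ ≥ 1 / 2`. Then it is
enough that one of the two signs `φ`, `-φ` satisfies the bound: if both failed, two disjoint half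
spaces would each have prior mass more than `1 / 2`.
-/

section SquareExponentialMoments

theorem exp_half_sq_eq_integral (x : ℝ) :
    Real.exp ((x / 2) ^ 2) = (√Real.pi)⁻¹ * ∫ t : ℝ, Real.exp (t * x) * Real.exp (-t ^ 2) := by
  have complete_square (t : ℝ) : Real.exp (t * x) * Real.exp (-t ^ 2) =
      Real.exp ((x / 2) ^ 2) * Real.exp (-1 * (t - x / 2) ^ 2) := by
    rw [← Real.exp_add, ← Real.exp_add]
    ring_nf
  simp_rw [complete_square, integral_const_mul,
    integral_sub_right_eq_self (fun t => Real.exp (-1 * t ^ 2)), integral_gaussian, div_one]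
  field_simp

theorem integrable_exp_mul_exp_neg_sq (x : ℝ) :
    Integrable fun t : ℝ => Real.exp (t * x) * Real.exp (-t ^ 2) := by
  have hgauss := ((integrable_exp_neg_mul_sq one_pos).comp_sub_right (x / 2)).const_mul
    (Real.exp ((x / 2) ^ 2))
  refine hgauss.congr (.of_forall fun t => ?_)
  simp only [← Real.exp_add]
  ring_nf

/- Writing `exp (x² / 4)` as a Gaussian average of `exp (t x)` turns the sub-Gaussian hypothesis,
which is linear in the exponent, into a bound on the square-exponential moment. -/
theorem sum_exp_half_sq_le {κ : Type*} {s : Finset κ} {X : κ → ℝ} {N : ℝ}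
    (hX : ∀ t : ℝ, ∑ k ∈ s, Real.exp (t * X k) ≤ N * Real.exp (t ^ 2 / 2)) :
    ∑ k ∈ s, Real.exp ((X k / 2) ^ 2) ≤ N * √2 := by
  have gaussian_bound : ∑ k ∈ s, ∫ t : ℝ, Real.exp (t * X k) * Real.exp (-t ^ 2) ≤
      N * √(Real.pi / (1 / 2)) := by
    rw [← integral_finsetSum _ fun k _ => integrable_exp_mul_exp_neg_sq (X k),
      ← integral_gaussian (1 / 2), ← integral_const_mul]
    refine integral_mono (integrable_finsetSum _ fun k _ => integrable_exp_mul_exp_neg_sq (X k))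
      ((integrable_exp_neg_mul_sq one_half_pos).const_mul N) fun t => ?_
    calc ∑ k ∈ s, Real.exp (t * X k) * Real.exp (-t ^ 2)
        = (∑ k ∈ s, Real.exp (t * X k)) * Real.exp (-t ^ 2) := (Finset.sum_mul ..).symm
      _ ≤ N * Real.exp (t ^ 2 / 2) * Real.exp (-t ^ 2) := by gcongr; exact hX t
      _ = N * Real.exp (-(1 / 2) * t ^ 2) := by rw [mul_assoc, ← Real.exp_add]; ring_nf
  simp_rw [exp_half_sq_eq_integral, ← Finset.mul_sum]
  calc (√Real.pi)⁻¹ * ∑ k ∈ s, ∫ t : ℝ, Real.exp (t * X k) * Real.exp (-t ^ 2)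
      ≤ (√Real.pi)⁻¹ * (N * √(Real.pi / (1 / 2))) := by gcongr
    _ = N * √2 := by
      rw [one_div, div_inv_eq_mul, Real.sqrt_mul Real.pi_pos.le]
      field_simp

theorem convexOn_exp_sq : ConvexOn ℝ Set.univ fun x : ℝ => Real.exp (x ^ 2) :=
  (convexOn_exp.subset (Set.subset_univ _)
    (isPreconnected_univ.image _ (continuous_pow 2).continuousOn).convex).comp
    even_two.convexOn_pow (Real.exp_monotone.monotoneOn _)

theorem abs_setAverage_le_sqrt_log {Ω : Type*} [MeasurableSpace Ω] {μ : Measure Ω} {s : Set Ω}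
    {Y : Ω → ℝ} {M : ℝ} (hs₀ : μ s ≠ 0) (hs : μ s ≠ ∞) (hY : IntegrableOn Y s μ)
    (hexp : IntegrableOn (fun ω => Real.exp (Y ω ^ 2)) s μ)
    (hM : ∫ ω in s, Real.exp (Y ω ^ 2) ∂μ ≤ M) :
    |⨍ ω in s, Y ω ∂μ| ≤ √(Real.log (M / μ.real s)) := by
  have hμ : 0 < μ.real s := ENNReal.toReal_pos hs₀ hs
  have jensen : Real.exp ((⨍ ω in s, Y ω ∂μ) ^ 2) ≤ ⨍ ω in s, Real.exp (Y ω ^ 2) ∂μ :=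
    convexOn_exp_sq.map_set_average_le (by fun_prop) isClosed_univ hs₀ hs (by simp) hY hexp
  have average_le : ⨍ ω in s, Real.exp (Y ω ^ 2) ∂μ ≤ M / μ.real s := by
    rw [setAverage_eq, smul_eq_mul, ← div_eq_inv_mul]
    gcongr
  have exp_le := jensen.trans average_le
  exact Real.abs_le_sqrt <| (Real.le_log_iff_exp_le ((Real.exp_pos _).trans_le exp_le)).2 exp_le

end SquareExponentialMoments

section SignVectors

variable {ι : Type*} [Fintype ι] [DecidableEq ι]

/-- The vector of `{-1, 1}^ι` with entry `-1` exactly on `s`. Letting `s` range over all finsets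
enumerates the outcomes of `ι` independent Rademacher signs. -/
def signVector (s : Finset ι) : EuclideanSpace ℝ ι :=
  WithLp.toLp 2 (s.piecewise (-1) 1)

theorem inner_signVector (s : Finset ι) (u : EuclideanSpace ℝ ι) :
    inner ℝ (signVector s) u = ∑ i, s.piecewise (-u) u i := by
  simp only [signVector, PiLp.inner_apply, RCLike.inner_apply, conj_trivial]
  refine Finset.sum_congr rfl fun i _ => ?_
  by_cases hi : i ∈ s <;> simp [hi]

theorem norm_signVector (s : Finset ι) : ‖signVector s‖ = √(Fintype.card ι) := by
  have entry_sq (i : ι) : s.piecewise (-1 : ι → ℝ) 1 i ^ 2 = 1 := by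
    by_cases hi : i ∈ s <;> simp [hi]
  simp [EuclideanSpace.norm_eq, signVector, entry_sq]

theorem sum_exp_inner_signVector (u : EuclideanSpace ℝ ι) :
    ∑ s : Finset ι, Real.exp (inner ℝ (signVector s) u) = ∏ i, (2 * Real.cosh (u i)) := by
  have two_mul_cosh (x : ℝ) : 2 * Real.cosh x = Real.exp (-x) + Real.exp x := by
    rw [Real.cosh_eq]
    ring
  simp_rw [two_mul_cosh, Fintype.prod_add, inner_signVector, Finset.sum_piecewise, Real.exp_add,
    Real.exp_sum, Finset.univ_inter, Finset.compl_eq_univ_sdiff, PiLp.neg_apply]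

theorem sum_exp_inner_signVector_le (u : EuclideanSpace ℝ ι) :
    ∑ s : Finset ι, Real.exp (inner ℝ (signVector s) u) ≤
      2 ^ Fintype.card ι * Real.exp (‖u‖ ^ 2 / 2) := by
  calc ∑ s : Finset ι, Real.exp (inner ℝ (signVector s) u)
      = ∏ i, (2 * Real.cosh (u i)) := sum_exp_inner_signVector u
    _ ≤ ∏ i, (2 * Real.exp (u i ^ 2 / 2)) := by
      gcongr with i
      exact Real.cosh_le_exp_half_sq (u i)
    _ = 2 ^ Fintype.card ι * Real.exp (‖u‖ ^ 2 / 2) := by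
      rw [Finset.prod_mul_distrib, ← Real.exp_sum, ← Finset.sum_div, EuclideanSpace.real_norm_sq_eq]
      simp

theorem sum_exp_sq_inner_signVector_le {u : EuclideanSpace ℝ ι} {d : ℝ} (hd : 0 < d)
    (hu : ‖u‖ ≤ d) :
    ∑ s : Finset ι, Real.exp ((inner ℝ (signVector s) u / (2 * d)) ^ 2) ≤
      2 ^ Fintype.card ι * √2 := by
  have subgaussian (t : ℝ) :
      ∑ s : Finset ι, Real.exp (t * (inner ℝ (signVector s) u / d)) ≤
        2 ^ Fintype.card ι * Real.exp (t ^ 2 / 2) := by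
    have hle : ‖(t / d) • u‖ ^ 2 ≤ t ^ 2 := by
      rw [norm_smul, mul_pow, Real.norm_eq_abs, sq_abs, div_pow, div_mul_eq_mul_div,
        div_le_iff₀ (by positivity)]
      gcongr
    calc ∑ s : Finset ι, Real.exp (t * (inner ℝ (signVector s) u / d))
        = ∑ s : Finset ι, Real.exp (inner ℝ (signVector s) ((t / d) • u)) := by
          simp_rw [inner_smul_right, mul_div_assoc', div_mul_eq_mul_div]
      _ ≤ 2 ^ Fintype.card ι * Real.exp (‖(t / d) • u‖ ^ 2 / 2) := sum_exp_inner_signVector_le _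
      _ ≤ 2 ^ Fintype.card ι * Real.exp (t ^ 2 / 2) := by gcongr
  simpa only [div_div, mul_comm d] using sum_exp_half_sq_le subgaussian

end SignVectors

section Chaining

theorem setAverage_prod_sub {α β G : Type*} [MeasurableSpace α] [MeasurableSpace β]
    [NormedAddCommGroup G] [NormedSpace ℝ G] {μ : Measure α} {ν : Measure β} [SFinite μ]
    [SFinite ν] {s : Set α} {t : Set β} {f : α → G} {g : β → G} (hs₀ : μ s ≠ 0) (hs : μ s ≠ ∞)
    (ht₀ : ν t ≠ 0) (ht : ν t ≠ ∞) (hf : IntegrableOn f s μ) (hg : IntegrableOn g t ν) :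
    ⨍ p in s ×ˢ t, (f p.1 - g p.2) ∂μ.prod ν = ⨍ x in s, f x ∂μ - ⨍ y in t, g y ∂ν := by
  have : Fact (μ s < ∞) := ⟨hs.lt_top⟩
  have : Fact (ν t < ∞) := ⟨ht.lt_top⟩
  have hμ : μ.real s ≠ 0 := (ENNReal.toReal_pos hs₀ hs).ne'
  have hν : ν.real t ≠ 0 := (ENNReal.toReal_pos ht₀ ht).ne'
  rw [setAverage_eq, setAverage_eq, setAverage_eq, measureReal_prod_prod, ← Measure.prod_restrict,
    integral_sub (hf.comp_fst _) (hg.comp_snd _), integral_fun_fst, integral_fun_snd, smul_sub,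
    smul_smul, smul_smul, measureReal_restrict_apply_univ, measureReal_restrict_apply_univ,
    mul_inv, inv_mul_cancel_right₀ hν, mul_right_comm, inv_mul_cancel₀ hμ, one_mul]

variable {E : Type*} [NormedAddCommGroup E] [MeasurableSpace E]

/-- The reference measure `ν`, replaced at level `0` of the chain by the unit mass at the origin,
so that chains of averages start at the value `φ 0 = 0`. -/
def anchoredPrior (ν : Measure E) : ℕ → Measure E
  | 0 => Measure.dirac 0
  | _ + 1 => ν

instance (ν : Measure E) [IsProbabilityMeasure ν] (k : ℕ) :
    IsProbabilityMeasure (anchoredPrior ν k) := by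
  cases k <;> rw [anchoredPrior] <;> infer_instance

theorem dirac_zero_closedBall {x : E} {R : ℝ} (hx : ‖x‖ ≤ R) :
    Measure.dirac 0 (Metric.closedBall x R) = 1 :=
  Measure.dirac_apply_of_mem (by simpa [dist_comm] using hx)

theorem anchoredPrior_closedBall_succ_le (ν : Measure E) [IsProbabilityMeasure ν] {R : ℝ}
    (hR : 0 ≤ R) {x : E} (hx : ‖x‖ ≤ R) (k : ℕ) :
    ν (Metric.closedBall x (R / 2 ^ (k + 1))) ≤
      anchoredPrior ν k (Metric.closedBall x (R / 2 ^ k)) := by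
  cases k with
  | zero =>
    simpa [anchoredPrior, dirac_zero_closedBall hx] using prob_le_one
  | succ k =>
    refine measure_mono (Metric.closedBall_subset_closedBall ?_)
    gcongr <;> simp

variable [NormedSpace ℝ E]

/-- The square-exponential moment of the functional `φ` along the increments `y - z` of length at
most `d`, for `y` and `z` independent with laws `μ` and `ν`. It controls every difference of
averages of `φ` over two sets that are within distance `d` of each other. -/
def incrementMoment (μ ν : Measure E) (d : ℝ) (φ : E →L[ℝ] ℝ) : ℝ :=
  ∫ p in {p : E × E | dist p.1 p.2 ≤ d}, Real.exp ((φ (p.1 - p.2) / (2 * d)) ^ 2) ∂μ.prod ν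

/-- The square-exponential moment governing the link of the chain between the averages over the
balls of radius `R / 2 ^ (k + 1)` and `R / 2 ^ k`. -/
def chainMoment (ν : Measure E) (R : ℝ) (φ : E →L[ℝ] ℝ) (k : ℕ) : ℝ :=
  incrementMoment ν (anchoredPrior ν k) (R / 2 ^ (k + 1) + R / 2 ^ k) φ

variable [BorelSpace E]

theorem integrableOn_closedBall (φ : E →L[ℝ] ℝ) (μ : Measure E) [IsFiniteMeasure μ] (x : E)
    (r : ℝ) : IntegrableOn φ (Metric.closedBall x r) μ := by
  refine Measure.integrableOn_of_bounded (M := ‖φ‖ * (‖x‖ + r)) (measure_ne_top _ _)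
    φ.continuous.measurable.aestronglyMeasurable ?_
  refine ae_restrict_of_forall_mem Metric.isClosed_closedBall.measurableSet fun y hy => ?_
  exact (φ.le_opNorm y).trans (by gcongr; exact norm_le_of_mem_closedBall hy)

theorem abs_sub_setAverage_closedBall_le (φ : E →L[ℝ] ℝ) {μ : Measure E} [IsFiniteMeasure μ]
    {x : E} {r : ℝ} (hμ : μ (Metric.closedBall x r) ≠ 0) :
    |φ x - ⨍ y in Metric.closedBall x r, φ y ∂μ| ≤ ‖φ‖ * r := by
  have mem_closedBall : ⨍ y in Metric.closedBall x r, φ y ∂μ ∈ Metric.closedBall (φ x) (‖φ‖ * r) :=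
    (convex_closedBall _ _).set_average_mem Metric.isClosed_closedBall hμ (measure_ne_top _ _)
      (ae_restrict_of_forall_mem Metric.isClosed_closedBall.measurableSet fun y hy =>
        (φ.dist_le_opNorm y x).trans (by gcongr; exact hy))
      (integrableOn_closedBall φ μ x r)
  rwa [Metric.mem_closedBall', Real.dist_eq] at mem_closedBall

/-- The level-`k` average of `φ` in the chain that refines the origin to the point `x`. -/
def chainAverage (ν : Measure E) (R : ℝ) (φ : E →L[ℝ] ℝ) (x : E) (k : ℕ) : ℝ :=
  ⨍ y in Metric.closedBall x (R / 2 ^ k), φ y ∂anchoredPrior ν k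

theorem chainAverage_zero (ν : Measure E) (R : ℝ) (φ : E →L[ℝ] ℝ) (x : E) :
    chainAverage ν R φ x 0 = 0 := by
  rw [chainAverage, pow_zero, div_one, anchoredPrior, setAverage_eq,
    ← integral_indicator Metric.isClosed_closedBall.measurableSet,
    integral_dirac' _ _ (φ.measurable.indicator
      Metric.isClosed_closedBall.measurableSet).stronglyMeasurable]
  simp

variable [SecondCountableTopology E]

theorem integrableOn_exp_increment (φ : E →L[ℝ] ℝ) (μ ν : Measure E) [IsFiniteMeasure μ]
    [IsFiniteMeasure ν] (d : ℝ) :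
    IntegrableOn (fun p : E × E => Real.exp ((φ (p.1 - p.2) / (2 * d)) ^ 2))
      {p | dist p.1 p.2 ≤ d} (μ.prod ν) := by
  refine Measure.integrableOn_of_bounded (M := Real.exp ((‖φ‖ * d / (2 * d)) ^ 2))
    (measure_ne_top _ _) (by fun_prop) ?_
  refine ae_restrict_of_forall_mem (measurableSet_le (by fun_prop) (by fun_prop)) fun p hp => ?_
  have increment_le : |φ (p.1 - p.2)| ≤ ‖φ‖ * d :=
    (φ.le_opNorm _).trans (by gcongr; simpa [dist_eq_norm] using hp)
  rw [Real.norm_eq_abs, Real.abs_exp, Real.exp_le_exp, div_pow, div_pow]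
  gcongr ?_ / _
  exact sq_le_sq' (abs_le.1 increment_le).1 (abs_le.1 increment_le).2

theorem abs_setAverage_closedBall_sub_le {φ : E →L[ℝ] ℝ} {μ ν : Measure E} [IsFiniteMeasure μ]
    [IsFiniteMeasure ν] {x : E} {r r' M : ℝ} (hr : 0 < r + r')
    (hμ : μ (Metric.closedBall x r) ≠ 0) (hν : ν (Metric.closedBall x r') ≠ 0)
    (hM : incrementMoment μ ν (r + r') φ ≤ M) :
    |⨍ y in Metric.closedBall x r, φ y ∂μ - ⨍ z in Metric.closedBall x r', φ z ∂ν| ≤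
      2 * (r + r') * √(Real.log (M /
        (μ.real (Metric.closedBall x r) * ν.real (Metric.closedBall x r')))) := by
  set s := Metric.closedBall x r
  set t := Metric.closedBall x r'
  have hst : s ×ˢ t ⊆ {p : E × E | dist p.1 p.2 ≤ r + r'} := fun p hp =>
    (dist_triangle_right _ _ x).trans (add_le_add hp.1 hp.2)
  have hφs := integrableOn_closedBall φ μ x r
  have hφt := integrableOn_closedBall φ ν x r'
  have hφst : IntegrableOn (fun p : E × E => φ (p.1 - p.2)) (s ×ˢ t) (μ.prod ν) := by
    have : Integrable (fun p : E × E => φ p.1 - φ p.2) ((μ.restrict s).prod (ν.restrict t)) :=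
      (hφs.comp_fst _).sub (hφt.comp_snd _)
    simpa [IntegrableOn, ← Measure.prod_restrict] using this
  have hexp := integrableOn_exp_increment φ μ ν (r + r')
  have average_le : |⨍ p in s ×ˢ t, φ (p.1 - p.2) / (2 * (r + r')) ∂μ.prod ν| ≤
      √(Real.log (M / (μ.real s * ν.real t))) := by
    rw [← measureReal_prod_prod]
    refine abs_setAverage_le_sqrt_log ?_ (measure_ne_top _ _) (hφst.div_const _)
      (hexp.mono_set hst) ((setIntegral_mono_set hexp ?_ hst.eventuallyLE).trans hM)
    · simp [hμ, hν, s, t]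
    · exact .of_forall fun p => (Real.exp_pos _).le
  have average_div : ⨍ p in s ×ˢ t, φ (p.1 - p.2) / (2 * (r + r')) ∂μ.prod ν =
      (⨍ y in s, φ y ∂μ - ⨍ z in t, φ z ∂ν) / (2 * (r + r')) := by
    rw [← setAverage_prod_sub hμ (measure_ne_top _ _) hν (measure_ne_top _ _) hφs hφt]
    simp only [map_sub, average, integral_div]
  rwa [average_div, abs_div, abs_of_pos (by positivity : 0 < 2 * (r + r')),
    div_le_iff₀' (by positivity)] at average_le

theorem sqrt_log_div_mul_le {M p q : ℝ} (hM : 1 ≤ M) (hp : 0 < p) (hpq : p ≤ q) (hq : q ≤ 1) :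
    √(Real.log (M / (p * q))) ≤ √(Real.log M) + √2 * √(Real.log (1 / p)) := by
  have hlogM : 0 ≤ Real.log M := Real.log_nonneg hM
  have hlogp : 0 ≤ Real.log (1 / p) := Real.log_nonneg (one_le_one_div hp (hpq.trans hq))
  have log_le : Real.log (M / (p * q)) ≤ Real.log M + 2 * Real.log (1 / p) := by
    calc Real.log (M / (p * q)) ≤ Real.log (M * (1 / p) ^ 2) := by
          rw [one_div_pow, mul_one_div, sq]
          have hq₀ : 0 < q := hp.trans_le hpq
          have : 0 < M / (p * q) := by positivity
          gcongr
      _ = Real.log M + 2 * Real.log (1 / p) := by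
          rw [Real.log_mul (by positivity) (by positivity), Real.log_pow, Nat.cast_ofNat]
  refine Real.sqrt_le_iff.2 ⟨by positivity, log_le.trans ?_⟩
  have sq_sqrt_logM := Real.sq_sqrt hlogM
  have sq_sqrt_logp := Real.sq_sqrt hlogp
  have sq_sqrt_two := Real.sq_sqrt (zero_le_two (α := ℝ))
  have cross_nonneg : 0 ≤ √(Real.log M) * (√2 * √(Real.log (1 / p))) := by positivity
  rw [add_sq, mul_pow]
  nlinarith

theorem abs_chainAverage_succ_sub_le {ν : Measure E} [IsProbabilityMeasure ν] {R M : ℝ}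
    {φ : E →L[ℝ] ℝ} {x : E} {k : ℕ} (hR : 0 < R) (hx : ‖x‖ ≤ R) (hM₁ : 1 ≤ M)
    (hM : chainMoment ν R φ k ≤ M) (hν : ν (Metric.closedBall x (R / 2 ^ (k + 1))) ≠ 0) :
    |chainAverage ν R φ x (k + 1) - chainAverage ν R φ x k| ≤
      6 * (R / 2 ^ (k + 1)) * (√(Real.log M) +
        √2 * √(Real.log (1 / ν.real (Metric.closedBall x (R / 2 ^ (k + 1)))))) := by
  have mass_le := anchoredPrior_closedBall_succ_le ν hR.le hx k
  have hν' : anchoredPrior ν k (Metric.closedBall x (R / 2 ^ k)) ≠ 0 :=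
    ((pos_iff_ne_zero.2 hν).trans_le mass_le).ne'
  calc |chainAverage ν R φ x (k + 1) - chainAverage ν R φ x k|
      ≤ 2 * (R / 2 ^ (k + 1) + R / 2 ^ k) * √(Real.log (M /
          (ν.real (Metric.closedBall x (R / 2 ^ (k + 1))) *
            (anchoredPrior ν k).real (Metric.closedBall x (R / 2 ^ k))))) :=
        abs_setAverage_closedBall_sub_le (by positivity) hν hν' hM
    _ ≤ 2 * (R / 2 ^ (k + 1) + R / 2 ^ k) * (√(Real.log M) +
          √2 * √(Real.log (1 / ν.real (Metric.closedBall x (R / 2 ^ (k + 1)))))) := by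
        gcongr
        exact sqrt_log_div_mul_le hM₁ (ENNReal.toReal_pos hν (measure_ne_top _ _))
          (ENNReal.toReal_mono (measure_ne_top _ _) mass_le) measureReal_le_one
    _ = 6 * (R / 2 ^ (k + 1)) * (√(Real.log M) +
          √2 * √(Real.log (1 / ν.real (Metric.closedBall x (R / 2 ^ (k + 1)))))) := by
        rw [pow_succ]
        ring

theorem apply_le_sum_chain {ν : Measure E} [IsProbabilityMeasure ν] {R M : ℝ} {φ : E →L[ℝ] ℝ}
    {x : E} {J : ℕ} (hR : 0 < R) (hx : ‖x‖ ≤ R) (hM₁ : 1 ≤ M)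
    (hM : ∀ k < J, chainMoment ν R φ k ≤ M)
    (hν : ∀ k < J, ν (Metric.closedBall x (R / 2 ^ (k + 1))) ≠ 0) :
    φ x ≤ ‖φ‖ * (R / 2 ^ J) + ∑ k ∈ Finset.range J, 6 * (R / 2 ^ (k + 1)) * (√(Real.log M) +
      √2 * √(Real.log (1 / ν.real (Metric.closedBall x (R / 2 ^ (k + 1)))))) := by
  have mass_ne_zero : anchoredPrior ν J (Metric.closedBall x (R / 2 ^ J)) ≠ 0 := by
    cases J with
    | zero =>
      simp [anchoredPrior, dirac_zero_closedBall hx]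
    | succ J => exact hν J J.lt_succ_self
  have endpoint : φ x - chainAverage ν R φ x J ≤ ‖φ‖ * (R / 2 ^ J) :=
    (le_abs_self _).trans (abs_sub_setAverage_closedBall_le φ mass_ne_zero)
  have telescope : chainAverage ν R φ x J ≤ ∑ k ∈ Finset.range J, 6 * (R / 2 ^ (k + 1)) *
      (√(Real.log M) +
        √2 * √(Real.log (1 / ν.real (Metric.closedBall x (R / 2 ^ (k + 1)))))) := by
    rw [← sub_zero (chainAverage ν R φ x J), ← chainAverage_zero ν R φ x, ← Finset.sum_range_sub]
    refine Finset.sum_le_sum fun k hk => (le_abs_self _).trans ?_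
    rw [Finset.mem_range] at hk
    exact abs_chainAverage_succ_sub_le hR hx hM₁ (hM k hk) (hν k hk)
  linarith

theorem sum_range_div_two_pow_succ (R : ℝ) (J : ℕ) :
    ∑ k ∈ Finset.range J, R / 2 ^ (k + 1) = R - R / 2 ^ J := by
  have radius_eq (k : ℕ) : R / 2 ^ (k + 1) = R / 2 ^ k - R / 2 ^ (k + 1) := by
    rw [pow_succ]
    ring
  rw [Finset.sum_congr rfl fun k _ => radius_eq k, Finset.sum_range_sub' fun k => R / 2 ^ k,
    pow_zero, div_one]

theorem apply_le_sum_sqrt_log {ν : Measure E} [IsProbabilityMeasure ν] {R M : ℝ} {φ : E →L[ℝ] ℝ}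
    {x : E} {J : ℕ} (hR : 0 < R) (hx : ‖x‖ ≤ R) (hM₁ : 1 ≤ M)
    (hM : ∀ k < J, chainMoment ν R φ k ≤ M)
    (hν : ∀ k < J, ν (Metric.closedBall x (R / 2 ^ (k + 1))) ≠ 0) :
    φ x ≤ ‖φ‖ * (R / 2 ^ J) + 6 * R * √(Real.log M) + 12 * √2 * ∑ k ∈ Finset.range J,
      R / 2 ^ (k + 2) * √(Real.log (1 / ν.real (Metric.closedBall x (R / 2 ^ (k + 1))))) := by
  have sum_radii_le : ∑ k ∈ Finset.range J, R / 2 ^ (k + 1) ≤ R := by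
    rw [sum_range_div_two_pow_succ]
    exact sub_le_self _ (by positivity)
  set h : ℕ → ℝ := fun k => √(Real.log (1 / ν.real (Metric.closedBall x (R / 2 ^ (k + 1)))))
  calc φ x ≤ ‖φ‖ * (R / 2 ^ J) + ∑ k ∈ Finset.range J,
        6 * (R / 2 ^ (k + 1)) * (√(Real.log M) + √2 * h k) := apply_le_sum_chain hR hx hM₁ hM hν
    _ = ‖φ‖ * (R / 2 ^ J) + 6 * (∑ k ∈ Finset.range J, R / 2 ^ (k + 1)) * √(Real.log M) +
        12 * √2 * ∑ k ∈ Finset.range J, R / 2 ^ (k + 2) * h k := by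
      rw [add_assoc, mul_right_comm, Finset.mul_sum, Finset.mul_sum, ← Finset.sum_add_distrib]
      congr 1
      refine Finset.sum_congr rfl fun k _ => ?_
      rw [pow_succ _ (k + 1)]
      ring
    _ ≤ ‖φ‖ * (R / 2 ^ J) + 6 * R * √(Real.log M) +
        12 * √2 * ∑ k ∈ Finset.range J, R / 2 ^ (k + 2) * h k := by gcongr

end Chaining

section EntropyIntegral

theorem antitone_negLog : Antitone negLog := by
  intro p q hpq
  rcases eq_or_ne p 0 with rfl | hp
  · simp [negLog]
  have hq : q ≠ 0 := ((pos_iff_ne_zero.2 hp).trans_le hpq).ne'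
  rw [negLog, negLog, if_neg hp, if_neg hq]
  rcases eq_or_ne q ∞ with rfl | hq'
  · simp
  have hp₀ : 0 < p.toReal := ENNReal.toReal_pos hp (ne_top_of_le_ne_top hq' hpq)
  have hq₀ : 0 < q.toReal := ENNReal.toReal_pos hq hq'
  gcongr

theorem negLog_rpow_half {p : ℝ≥0∞} (hp : p ≠ 0) :
    negLog p ^ (1 / 2 : ℝ) = ENNReal.ofReal √(Real.log (1 / p.toReal)) := by
  rw [negLog, if_neg hp]
  rcases le_total 0 (Real.log (1 / p.toReal)) with hlog | hlog
  · rw [ENNReal.ofReal_rpow_of_nonneg hlog (by norm_num), Real.sqrt_eq_rpow]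
  · rw [ENNReal.ofReal_of_nonpos hlog, Real.sqrt_eq_zero_of_nonpos hlog, ENNReal.ofReal_zero,
      ENNReal.zero_rpow_of_pos (by norm_num)]

theorem mball_dist {X : Type*} [PseudoMetricSpace X] (x : X) (r : ℝ) :
    mball dist x r = Metric.closedBall x r :=
  Set.ext fun y => by rw [Metric.mem_closedBall', mball, Set.mem_ofPred_eq]

variable {F : Type*} [MeasurableSpace F]

/-- The pointwise entropy integral `∫_α^r √(log (1 / π (B_ρ(f, ε)))) dε` of the prior `π`
at `f`, with value `∞` allowed. -/
def entropyIntegral (π : Measure F) (ρ : F → F → ℝ) (f : F) (α r : ℝ) : ℝ≥0∞ :=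
  ∫⁻ ε in Set.Ioc α r, negLog (π (mball ρ f ε)) ^ (1 / 2 : ℝ)

theorem entropyIntegral_map_le {X : Type*} [PseudoMetricSpace X] [MeasurableSpace X]
    [OpensMeasurableSpace X] {π : Measure F} {ρ : F → F → ℝ} {v : F → X} (hv : Measurable v) {f : F}
    (hρ : ∀ g, dist (v f) (v g) ≤ ρ f g) (α r : ℝ) :
    entropyIntegral (π.map v) dist (v f) α r ≤ entropyIntegral π ρ f α r := by
  refine lintegral_mono fun ε => ENNReal.rpow_le_rpow (antitone_negLog ?_) (by norm_num)
  rw [mball_dist, Measure.map_apply hv Metric.isClosed_closedBall.measurableSet]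
  exact measure_mono fun g hg => Metric.mem_closedBall'.2 ((hρ g).trans hg)

theorem sum_ofReal_sub_mul_le_lintegral {g : ℝ → ℝ≥0∞} (hg : Antitone g) {r : ℕ → ℝ}
    (hr : Antitone r) (J : ℕ) :
    ∑ k ∈ Finset.range J, ENNReal.ofReal (r k - r (k + 1)) * g (r k) ≤
      ∫⁻ ε in Set.Ioc (r J) (r 0), g ε := by
  induction J with
  | zero => simp
  | succ J ih =>
    have term_le : ENNReal.ofReal (r J - r (J + 1)) * g (r J) ≤
        ∫⁻ ε in Set.Ioc (r (J + 1)) (r J), g ε := by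
      rw [← Real.volume_Ioc, mul_comm, ← setLIntegral_const]
      exact setLIntegral_mono' measurableSet_Ioc fun ε hε => hg hε.2
    rw [Finset.sum_range_succ, add_comm, ← Set.Ioc_union_Ioc_eq_Ioc (hr J.le_succ) (hr J.zero_le),
      lintegral_union measurableSet_Ioc (Set.Ioc_disjoint_Ioc_of_le le_rfl)]
    exact add_le_add term_le ih

theorem sum_dyadic_le_entropyIntegral (π : Measure F) (ρ : F → F → ℝ) (f : F) {R α : ℝ}
    (hR : 0 ≤ R) {J : ℕ} (hα : ∀ k < J, α ≤ R / 2 ^ (k + 2)) :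
    ∑ k ∈ Finset.range J, ENNReal.ofReal (R / 2 ^ (k + 2)) *
      negLog (π (mball ρ f (R / 2 ^ (k + 1)))) ^ (1 / 2 : ℝ) ≤ entropyIntegral π ρ f α R := by
  cases J with
  | zero => simp
  | succ J =>
    have integrand_antitone : Antitone fun ε => negLog (π (mball ρ f ε)) ^ (1 / 2 : ℝ) :=
      fun ε ε' hε => ENNReal.rpow_le_rpow
        (antitone_negLog (measure_mono fun _ hg => le_trans hg hε)) (by norm_num)
    have radii_antitone : Antitone fun k : ℕ => R / 2 ^ (k + 1) :=
      antitone_nat_of_succ_le fun k => by gcongr <;> simp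
    have radii_sub (k : ℕ) : R / 2 ^ (k + 1) - R / 2 ^ (k + 1 + 1) = R / 2 ^ (k + 2) := by
      rw [pow_succ _ (k + 1)]
      ring
    have riemann_sum := sum_ofReal_sub_mul_le_lintegral integrand_antitone radii_antitone (J + 1)
    simp only [radii_sub] at riemann_sum
    exact riemann_sum.trans (lintegral_mono_set
      (Set.Ioc_subset_Ioc (hα J J.lt_succ_self) (div_le_self hR (one_le_pow₀ one_le_two))))

theorem exists_dyadic_cutoff {R α : ℝ} (hR : 0 ≤ R) (hα : 0 ≤ α) (K : ℕ) :
    ∃ J ≤ K, (∀ k < J, α ≤ R / 2 ^ (k + 2)) ∧ R / 2 ^ J ≤ 4 * α + R / 2 ^ K := by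
  by_cases hK : ∀ k < K, α ≤ R / 2 ^ (k + 2)
  · exact ⟨K, le_rfl, hK, by linarith⟩
  push Not at hK
  classical
  have ⟨hJK, hJ⟩ := Nat.find_spec hK
  refine ⟨Nat.find hK, hJK.le, fun k hk => ?_, ?_⟩
  · by_contra! hlt
    exact Nat.find_min hK hk ⟨hk.trans hJK, hlt⟩
  · rw [pow_add, ← div_div, div_lt_iff₀ (by norm_num)] at hJ
    have : 0 ≤ R / 2 ^ K := by positivity
    linarith

theorem ofReal_apply_le_entropyIntegral {E : Type*} [NormedAddCommGroup E] [NormedSpace ℝ E]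
    [MeasurableSpace E] [BorelSpace E] [SecondCountableTopology E] {ν : Measure E}
    [IsProbabilityMeasure ν] {R M α : ℝ} {φ : E →L[ℝ] ℝ} {x : E} {K : ℕ} (hR : 0 < R)
    (hx : ‖x‖ ≤ R) (hα : 0 ≤ α) (hM₁ : 1 ≤ M) (hM : ∀ k < K, chainMoment ν R φ k ≤ M) :
    ENNReal.ofReal (φ x) ≤
      ENNReal.ofReal (‖φ‖ * (4 * α + R / 2 ^ K) + 6 * R * √(Real.log M)) +
        ENNReal.ofReal (12 * √2) * entropyIntegral ν dist x α R := by
  obtain ⟨J, hJK, hJα, hJ⟩ := exists_dyadic_cutoff hR.le hα K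
  have riemann_sum := sum_dyadic_le_entropyIntegral ν dist x hR.le hJα
  simp only [mball_dist] at riemann_sum
  set b : ℕ → Set E := fun k => Metric.closedBall x (R / 2 ^ (k + 1))
  rcases eq_or_ne (entropyIntegral ν dist x α R) ∞ with htop | htop
  · simp [htop]
  have mass_ne_zero : ∀ k < J, ν (b k) ≠ 0 := by
    intro k hk hzero
    have term_le := (Finset.single_le_sum_of_canonicallyOrdered
      (Finset.mem_range.2 hk)).trans riemann_sum
    have hpos : ENNReal.ofReal (R / 2 ^ (k + 2)) ≠ 0 := (ENNReal.ofReal_pos.2 (by positivity)).ne'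
    simp [b, negLog, hzero, ENNReal.mul_top hpos, htop] at term_le
  have apply_le := apply_le_sum_sqrt_log hR hx hM₁ (fun k hk => hM k (hk.trans_le hJK)) mass_ne_zero
  have ofReal_sum_le : ENNReal.ofReal
      (∑ k ∈ Finset.range J, R / 2 ^ (k + 2) * √(Real.log (1 / ν.real (b k)))) ≤
        entropyIntegral ν dist x α R := by
    refine le_of_eq_of_le ?_ riemann_sum
    rw [ENNReal.ofReal_sum_of_nonneg fun k _ => by positivity]
    refine Finset.sum_congr rfl fun k hk => ?_
    rw [ENNReal.ofReal_mul (by positivity), negLog_rpow_half (mass_ne_zero k (by simpa using hk)),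
      measureReal_def]
  refine (ENNReal.ofReal_le_ofReal apply_le).trans (ENNReal.ofReal_add_le.trans ?_)
  rw [ENNReal.ofReal_mul (by positivity)]
  gcongr

end EntropyIntegral

section RandomSigns

theorem one_sub_mul_card_le_ncard {κ : Type*} [Fintype κ] {T : κ → ℝ} {δ M : ℝ}
    (hT : ∀ k, 0 ≤ T k) (hM : 0 < M) (hsum : ∑ k, T k ≤ δ * M * Fintype.card κ) :
    (1 - δ) * Fintype.card κ ≤ {k | T k ≤ M}.ncard := by
  classical
  have markov : {k | T k ≤ M}ᶜ.ncard * M ≤ ∑ k, T k := by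
    rw [Set.ncard_eq_toFinset_card', ← nsmul_eq_mul]
    refine (Finset.card_nsmul_le_sum _ T M fun k hk => ?_).trans
      (Finset.sum_le_univ_sum_of_nonneg hT)
    simp only [Set.mem_toFinset, Set.mem_compl_iff, Set.mem_ofPred_eq, not_le] at hk
    exact hk.le
  have card_add : ({k | T k ≤ M}.ncard : ℝ) + {k | T k ≤ M}ᶜ.ncard = Fintype.card κ := by
    rw [← Nat.card_eq_fintype_card]
    exact_mod_cast Set.ncard_add_ncard_compl _
  have ncard_compl_le : ({k | T k ≤ M}ᶜ.ncard : ℝ) ≤ δ * Fintype.card κ :=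
    le_of_mul_le_mul_right (by linarith) hM
  linarith

variable {ι : Type*} [Fintype ι] [DecidableEq ι]

theorem sum_incrementMoment_signVector_le (μ ν : Measure (EuclideanSpace ℝ ι))
    [IsProbabilityMeasure μ] [IsProbabilityMeasure ν] {d : ℝ} (hd : 0 < d) :
    ∑ s : Finset ι, incrementMoment μ ν d (innerSL ℝ (signVector s)) ≤
      2 ^ Fintype.card ι * √2 := by
  simp only [incrementMoment]
  rw [← integral_finsetSum _ fun s _ => integrableOn_exp_increment _ μ ν d]
  refine (Real.le_norm_self _).trans ((norm_setIntegral_le_of_norm_le_const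
    (C := 2 ^ Fintype.card ι * √2) (measure_lt_top _ _) fun p hp => ?_).trans ?_)
  · rw [Real.norm_eq_abs, abs_of_nonneg (Finset.sum_nonneg fun s _ => (Real.exp_pos _).le)]
    simpa using sum_exp_sq_inner_signVector_le hd (by simpa [dist_eq_norm] using hp)
  · exact mul_le_of_le_one_right (by positivity) measureReal_le_one

theorem chainMoment_nonneg {E : Type*} [NormedAddCommGroup E] [NormedSpace ℝ E] [MeasurableSpace E]
    (ν : Measure E) (R : ℝ) (φ : E →L[ℝ] ℝ) (k : ℕ) : 0 ≤ chainMoment ν R φ k :=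
  integral_nonneg fun _ => (Real.exp_pos _).le

theorem ncard_chainMoment_signVector_le (ν : Measure (EuclideanSpace ℝ ι)) [IsProbabilityMeasure ν]
    {R δ M : ℝ} {K : ℕ} (hR : 0 < R) (hM : 0 < M) (hK : K * √2 ≤ δ * M) :
    (1 - δ) * 2 ^ Fintype.card ι ≤
      {s : Finset ι | ∀ k < K, chainMoment ν R (innerSL ℝ (signVector s)) k ≤ M}.ncard := by
  set T : Finset ι → ℝ := fun s =>
    ∑ k ∈ Finset.range K, chainMoment ν R (innerSL ℝ (signVector s)) k
  have sum_le : ∑ s, T s ≤ δ * M * Fintype.card (Finset ι) := by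
    calc ∑ s, T s = ∑ k ∈ Finset.range K, ∑ s : Finset ι,
          chainMoment ν R (innerSL ℝ (signVector s)) k := Finset.sum_comm
      _ ≤ ∑ k ∈ Finset.range K, 2 ^ Fintype.card ι * √2 :=
        Finset.sum_le_sum fun k _ => sum_incrementMoment_signVector_le _ _ (by positivity)
      _ = K * √2 * Fintype.card (Finset ι) := by simp; ring
      _ ≤ δ * M * Fintype.card (Finset ι) := by gcongr
  have markov := one_sub_mul_card_le_ncard
    (fun s => Finset.sum_nonneg fun k _ => chainMoment_nonneg _ _ _ _) hM sum_le
  rw [Fintype.card_finset, Nat.cast_pow, Nat.cast_ofNat] at markov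
  refine markov.trans (Nat.cast_le.2 (Set.ncard_le_ncard fun s hs k hk => ?_))
  exact (Finset.single_le_sum (fun j _ => chainMoment_nonneg _ _ _ j)
    (Finset.mem_range.2 hk)).trans hs

end RandomSigns

section SingleSign

variable {E : Type*} [NormedAddCommGroup E] [NormedSpace ℝ E] [MeasurableSpace E]

theorem half_le_negLog_rpow_half {p : ℝ≥0∞} (hp : p ≤ 1 / 2) :
    1 / 2 ≤ negLog p ^ (1 / 2 : ℝ) := by
  refine le_trans ?_ (ENNReal.rpow_le_rpow (antitone_negLog hp) (by norm_num))
  have half_le : (1 / 2 : ℝ) ≤ √(Real.log 2) :=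
    Real.le_sqrt_of_sq_le (by linarith [Real.log_two_gt_d9])
  rw [negLog_rpow_half (by simp)]
  simpa using ENNReal.ofReal_le_ofReal half_le

theorem half_lt_measure_pos {ν : Measure E} {φ : E →L[ℝ] ℝ} (hφ : ‖φ‖ ≤ 1) {x : E} {R α : ℝ}
    (hx : ‖x‖ ≤ R) (hα : 0 ≤ α)
    (hlt : 4 * (ENNReal.ofReal α + entropyIntegral ν dist x α R) < ENNReal.ofReal (φ x)) :
    1 / 2 < ν {z | 0 < φ z} := by
  by_contra! hle
  have apply_le (z : E) : φ z ≤ ‖z‖ := by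
    simpa using (Real.le_norm_self _).trans (φ.le_of_opNorm_le hφ z)
  have apply_pos : 0 < φ x := ENNReal.ofReal_pos.1 (pos_of_gt hlt)
  have ball_subset : Metric.closedBall x (φ x / 2) ⊆ {z | 0 < φ z} := fun z hz => by
    have := apply_le (x - z)
    rw [map_sub, ← dist_eq_norm] at this
    have := Metric.mem_closedBall'.1 hz
    simp only [Set.mem_ofPred_eq]
    linarith
  have entropy_ge : ENNReal.ofReal ((φ x / 2 - α) / 2) ≤ entropyIntegral ν dist x α R := by
    calc ENNReal.ofReal ((φ x / 2 - α) / 2) = ∫⁻ _ in Set.Ioc α (φ x / 2), 1 / 2 := by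
          rw [setLIntegral_const, Real.volume_Ioc, mul_comm, ENNReal.ofReal_div_of_pos two_pos,
            ENNReal.ofReal_ofNat, div_eq_mul_inv, one_div]
      _ ≤ ∫⁻ ε in Set.Ioc α (φ x / 2), negLog (ν (mball dist x ε)) ^ (1 / 2 : ℝ) := by
          refine setLIntegral_mono' measurableSet_Ioc fun ε hε => half_le_negLog_rpow_half ?_
          rw [mball_dist]
          exact (measure_mono ((Metric.closedBall_subset_closedBall hε.2).trans ball_subset)).trans
            hle
      _ ≤ entropyIntegral ν dist x α R :=
          lintegral_mono_set (Set.Ioc_subset_Ioc_right (by linarith [apply_le x]))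
  have apply_le_real : φ x ≤ 4 * (α + max ((φ x / 2 - α) / 2) 0) := by
    linarith [le_max_left ((φ x / 2 - α) / 2) 0]
  refine hlt.not_ge ((ENNReal.ofReal_le_ofReal apply_le_real).trans ?_)
  rw [ENNReal.ofReal_mul (by norm_num), ENNReal.ofReal_add hα (le_max_right _ _)]
  simp only [ENNReal.ofReal_ofNat, ENNReal.ofReal_max, ENNReal.ofReal_zero, zero_le, sup_of_le_left]
  gcongr

variable [BorelSpace E]

theorem apply_le_or_neg_apply_le (ν : Measure E) [IsProbabilityMeasure ν] {φ : E →L[ℝ] ℝ}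
    (hφ : ‖φ‖ ≤ 1) (R : ℝ) :
    (∀ x, ‖x‖ ≤ R → ∀ α, 0 ≤ α →
      ENNReal.ofReal (φ x) ≤ 4 * (ENNReal.ofReal α + entropyIntegral ν dist x α R)) ∨
    ∀ x, ‖x‖ ≤ R → ∀ α, 0 ≤ α →
      ENNReal.ofReal (-φ x) ≤ 4 * (ENNReal.ofReal α + entropyIntegral ν dist x α R) := by
  by_contra! ⟨⟨x, hx, α, hα, hlt⟩, y, hy, β, hβ, hlt'⟩
  have pos_gt := half_lt_measure_pos hφ hx hα hlt
  have neg_gt := half_lt_measure_pos (φ := -φ) (by rwa [norm_neg]) hy hβ hlt'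
  have hdisj : Disjoint {z | 0 < φ z} {z | 0 < (-φ) z} := Set.disjoint_left.2 fun z hz hz' => by
    simp only [Set.mem_ofPred_eq, FunLike.coe_neg, Pi.neg_apply] at hz hz'
    linarith
  have total := prob_le_one (μ := ν) (s := {z | 0 < φ z} ∪ {z | 0 < (-φ) z})
  rw [measure_union hdisj (measurableSet_lt measurable_const (by fun_prop))] at total
  exact total.not_gt ((ENNReal.add_halves 1).symm.trans_lt (ENNReal.add_lt_add pos_gt neg_gt))

end SingleSign

section SignBound

variable {ι : Type*} [Fintype ι] [DecidableEq ι]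

/-- The sign vector `signVector s` satisfies the pointwise generalization bound with confidence
term `√(Λ / n)`, simultaneously at all points of the ball of radius `√2`. -/
def SatisfiesSignBound (ν : Measure (EuclideanSpace ℝ ι)) (Λ : ℝ) (s : Finset ι) : Prop :=
  ∀ x : EuclideanSpace ℝ ι, ‖x‖ ≤ √2 → ∀ α : ℝ, 0 ≤ α →
    ENNReal.ofReal (√2 / √(Fintype.card ι) * inner ℝ (signVector s) x) ≤
      ENNReal.ofReal 40 * (ENNReal.ofReal α +
        ENNReal.ofReal (1 / √(Fintype.card ι)) * entropyIntegral ν dist x α √2 +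
        ENNReal.ofReal √(Λ / Fintype.card ι))

theorem sqrt_two_div_sqrt_mul_le {n K : ℕ} {α q : ℝ} (hn : 0 < n) (hnK : n ≤ 2 ^ K) (hα : 0 ≤ α)
    (hq : 4 / 3 ≤ q) :
    √2 / √n * (√n * (4 * α + √2 / 2 ^ K) + 6 * √2 * √(Real.log (3 * q))) ≤
      40 * (α + √(Real.log q / n)) := by
  have hn₁ : (1 : ℝ) ≤ n := Nat.one_le_cast.2 hn
  have log_ge : 1 / 4 ≤ Real.log q :=
    (by norm_num : (1 / 4 : ℝ) ≤ 1 - (4 / 3)⁻¹).trans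
      ((Real.one_sub_inv_le_log_of_pos (by norm_num)).trans (Real.log_le_log (by norm_num) hq))
  have sqrt_ge : 1 / 2 ≤ √(Real.log q) := Real.le_sqrt_of_sq_le (by linarith)
  have sqrt_log_le : √(Real.log (3 * q)) ≤ 3 * √(Real.log q) := by
    rw [Real.log_mul (by norm_num) (by linarith)]
    refine Real.sqrt_le_iff.2 ⟨by positivity, ?_⟩
    rw [mul_pow, Real.sq_sqrt (by linarith)]
    linarith [Real.log_three_lt_d9]
  have endpoint_le : 2 / 2 ^ K ≤ 4 * (√(Real.log q) / √n) := by
    calc (2 : ℝ) / 2 ^ K ≤ 2 / √n := by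
          gcongr
          exact (Real.sqrt_le_iff.2 ⟨by positivity, le_self_pow₀ hn₁ two_ne_zero⟩).trans
            (by exact_mod_cast hnK)
      _ ≤ 4 * (√(Real.log q) / √n) := by
          rw [mul_div_assoc']
          gcongr
          linarith
  have sqrt_two_le : √2 ≤ 10 := Real.sqrt_le_iff.2 (by norm_num)
  rw [Real.sqrt_div (by linarith)]
  calc √2 / √n * (√n * (4 * α + √2 / 2 ^ K) + 6 * √2 * √(Real.log (3 * q)))
      = 4 * √2 * α + √2 ^ 2 / 2 ^ K + 6 * √2 ^ 2 * √(Real.log (3 * q)) / √n := by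
        field_simp
    _ = 4 * √2 * α + 2 / 2 ^ K + 12 * √(Real.log (3 * q)) / √n := by
        rw [Real.sq_sqrt zero_le_two]
        norm_num
    _ ≤ 4 * 10 * α + 4 * (√(Real.log q) / √n) + 12 * (3 * √(Real.log q)) / √n := by gcongr
    _ = 40 * (α + √(Real.log q) / √n) := by ring

theorem satisfiesSignBound_of_chainMoment_le [Nonempty ι] {ν : Measure (EuclideanSpace ℝ ι)}
    [IsProbabilityMeasure ν] {q : ℝ} {K : ℕ} {s : Finset ι} (hK : Fintype.card ι ≤ 2 ^ K)
    (hq : 4 / 3 ≤ q) (hs : ∀ k < K, chainMoment ν √2 (innerSL ℝ (signVector s)) k ≤ 3 * q) :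
    SatisfiesSignBound ν (Real.log q) s := by
  intro x hx α hα
  set n := Fintype.card ι
  have hn : 0 < n := Fintype.card_pos
  have chaining := ofReal_apply_le_entropyIntegral (by positivity) hx hα (by linarith) hs
  rw [innerSL_apply_norm, norm_signVector, innerSL_apply_apply] at chaining
  have scale_entropy : √2 / √n * (12 * √2) ≤ 40 * (1 / √n) := by
    rw [div_mul_eq_mul_div, mul_left_comm, Real.mul_self_sqrt zero_le_two, mul_one_div]
    gcongr
    norm_num
  calc ENNReal.ofReal (√2 / √n * inner ℝ (signVector s) x)
      = ENNReal.ofReal (√2 / √n) * ENNReal.ofReal (inner ℝ (signVector s) x) :=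
        ENNReal.ofReal_mul (by positivity)
    _ ≤ ENNReal.ofReal (√2 / √n) * (ENNReal.ofReal (√n * (4 * α + √2 / 2 ^ K) +
          6 * √2 * √(Real.log (3 * q))) +
          ENNReal.ofReal (12 * √2) * entropyIntegral ν dist x α √2) := by gcongr
    _ = ENNReal.ofReal (√2 / √n * (√n * (4 * α + √2 / 2 ^ K) + 6 * √2 * √(Real.log (3 * q)))) +
          ENNReal.ofReal (√2 / √n * (12 * √2)) * entropyIntegral ν dist x α √2 := by
        have hscale : 0 ≤ √2 / √n := by positivity
        rw [mul_add, ← mul_assoc, ← ENNReal.ofReal_mul hscale, ← ENNReal.ofReal_mul hscale]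
    _ ≤ ENNReal.ofReal (40 * (α + √(Real.log q / n))) +
          ENNReal.ofReal (40 * (1 / √n)) * entropyIntegral ν dist x α √2 := by
        gcongr ENNReal.ofReal ?_ + ENNReal.ofReal ?_ * _
        exact sqrt_two_div_sqrt_mul_le hn hK hα hq
    _ = ENNReal.ofReal 40 * (ENNReal.ofReal α + ENNReal.ofReal (1 / √n) *
          entropyIntegral ν dist x α √2 + ENNReal.ofReal √(Real.log q / n)) := by
        rw [ENNReal.ofReal_mul (by norm_num), ENNReal.ofReal_mul (by norm_num),
          ENNReal.ofReal_add hα (by positivity)]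
        ring

theorem signVector_compl (s : Finset ι) : signVector sᶜ = -signVector s := by
  ext i
  by_cases hi : i ∈ s <;> simp [signVector, hi]

theorem exists_satisfiesSignBound (hι : Fintype.card ι = 1) (ν : Measure (EuclideanSpace ℝ ι))
    [IsProbabilityMeasure ν] (Λ : ℝ) : ∃ s : Finset ι, SatisfiesSignBound ν Λ s := by
  have norm_le : ‖innerSL ℝ (signVector (∅ : Finset ι))‖ ≤ 1 := by
    simp [innerSL_apply_norm, norm_signVector, hι]
  have of_inner_le {s : Finset ι} (hs : ∀ x : EuclideanSpace ℝ ι, ‖x‖ ≤ √2 → ∀ α, 0 ≤ α →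
      ENNReal.ofReal (inner ℝ (signVector s) x) ≤
        4 * (ENNReal.ofReal α + entropyIntegral ν dist x α √2)) : SatisfiesSignBound ν Λ s := by
    intro x hx α hα
    have const_le : ENNReal.ofReal √2 * 4 ≤ ENNReal.ofReal 40 := by
      rw [← ENNReal.ofReal_ofNat 4, ← ENNReal.ofReal_mul (by positivity)]
      exact ENNReal.ofReal_le_ofReal (by linarith [Real.sqrt_two_lt_three_halves])
    simp only [hι, Nat.cast_one, Real.sqrt_one, div_one, ENNReal.ofReal_one, one_mul]
    rw [ENNReal.ofReal_mul (by positivity)]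
    calc ENNReal.ofReal √2 * ENNReal.ofReal (inner ℝ (signVector s) x)
        ≤ ENNReal.ofReal √2 * (4 * (ENNReal.ofReal α + entropyIntegral ν dist x α √2)) := by
          gcongr
          exact hs x hx α hα
      _ ≤ ENNReal.ofReal 40 * (ENNReal.ofReal α + entropyIntegral ν dist x α √2) := by
          rw [← mul_assoc]
          gcongr
      _ ≤ ENNReal.ofReal 40 * (ENNReal.ofReal α + entropyIntegral ν dist x α √2 +
            ENNReal.ofReal √Λ) := by
          gcongr _ * ?_
          exact le_self_add
  rcases apply_le_or_neg_apply_le ν norm_le √2 with h | h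
  · exact ⟨∅, of_inner_le h⟩
  · refine ⟨∅ᶜ, of_inner_le ?_⟩
    simpa [signVector_compl, -Finset.compl_empty] using h

theorem natLog_two_mul_sqrt_two_le (m : ℕ) : Nat.log 2 m * √2 ≤ 3 * Real.log m := by
  have natLog_le := Real.natLog_le_logb m 2
  rw [Real.logb, le_div_iff₀ (Real.log_pos (by norm_num)), Nat.cast_ofNat] at natLog_le
  have sqrt_two_le : √2 ≤ 3 * Real.log 2 := by
    linarith [Real.sqrt_two_lt_three_halves, Real.log_two_gt_d9]
  calc Nat.log 2 m * √2 ≤ Nat.log 2 m * (3 * Real.log 2) := by gcongr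
    _ = 3 * (Nat.log 2 m * Real.log 2) := by ring
    _ ≤ 3 * Real.log m := by gcongr

theorem eq_one_and_half_le_of_log_div_lt {n : ℕ} {δ : ℝ} (hn : 0 < n) (hδ₀ : 0 < δ) (hδ₁ : δ ≤ 1)
    (h : Real.log (2 * n) / δ < 4 / 3) : n = 1 ∧ 1 / 2 ≤ δ := by
  rw [div_lt_iff₀ hδ₀] at h
  have hn₁ : n = 1 := by
    by_contra hne
    have two_le : (2 : ℝ) ≤ n := by exact_mod_cast (by lia : 2 ≤ n)
    have log_four_le : 2 * Real.log 2 ≤ Real.log (2 * n) := by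
      rw [← Nat.cast_ofNat, ← Real.log_pow]
      exact Real.log_le_log (by norm_num) (by norm_num; linarith)
    linarith [Real.log_two_gt_d9]
  rw [hn₁, Nat.cast_one, mul_one] at h
  exact ⟨hn₁, by linarith [Real.log_two_gt_d9]⟩

theorem ncard_satisfiesSignBound [Nonempty ι] (ν : Measure (EuclideanSpace ℝ ι))
    [IsProbabilityMeasure ν] {δ : ℝ} (hδ₀ : 0 < δ) (hδ₁ : δ ≤ 1) :
    (1 - δ) * 2 ^ Fintype.card ι ≤
      {s | SatisfiesSignBound ν (Real.log (Real.log (2 * Fintype.card ι) / δ)) s}.ncard := by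
  set n := Fintype.card ι
  have hn : 0 < n := Fintype.card_pos
  set q := Real.log (2 * n) / δ with hq_def
  rcases le_or_gt (4 / 3) q with hq | hq
  · have hK : Nat.log 2 (2 * n) * √2 ≤ δ * (3 * q) := by
      rw [mul_left_comm, hq_def, mul_div_cancel₀ _ hδ₀.ne']
      exact_mod_cast natLog_two_mul_sqrt_two_le (2 * n)
    have hnK : n ≤ 2 ^ Nat.log 2 (2 * n) := by
      have := Nat.lt_pow_succ_log_self one_lt_two (2 * n)
      lia
    exact (ncard_chainMoment_signVector_le ν (by positivity) (by positivity) hK).trans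
      (Nat.cast_le.2 (Set.ncard_le_ncard fun s hs =>
        satisfiesSignBound_of_chainMoment_le hnK hq hs))
  · obtain ⟨hn₁, half_le⟩ := eq_one_and_half_le_of_log_div_lt hn hδ₀ hδ₁ hq
    obtain ⟨s, hs⟩ := exists_satisfiesSignBound hn₁ ν (Real.log q)
    have one_le_ncard : (1 : ℝ) ≤ {s | SatisfiesSignBound ν (Real.log q) s}.ncard :=
      Nat.one_le_cast.2 ((Set.ncard_pos (Set.toFinite _)).2 ⟨s, hs⟩)
    rw [hn₁, pow_one]
    linarith

end SignBound

section Swaps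

variable {ι Z : Type*} [DecidableEq ι]

/-- The pair of samples obtained from `p = (S, S')` by exchanging `S i` and `S' i` for every
`i ∈ s`. -/
def swapOn (s : Finset ι) (p : (ι → Z) × (ι → Z)) : (ι → Z) × (ι → Z) :=
  (s.piecewise p.2 p.1, s.piecewise p.1 p.2)

theorem swapOn_insert {s : Finset ι} {i : ι} (hi : i ∉ s) (p : (ι → Z) × (ι → Z)) :
    swapOn (insert i s) p = (Function.update (swapOn s p).1 i ((swapOn s p).2 i),
      Function.update (swapOn s p).2 i ((swapOn s p).1 i)) := by
  simp [swapOn, Finset.piecewise_insert, hi]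

theorem apply_swapOn_eq {γ : Type*} {g : (ι → Z) → (ι → Z) → γ}
    (hg : ∀ S S' i, g S S' = g (Function.update S i (S' i)) (Function.update S' i (S i)))
    (s : Finset ι) (p : (ι → Z) × (ι → Z)) : g (swapOn s p).1 (swapOn s p).2 = g p.1 p.2 := by
  induction s using Finset.induction_on with
  | empty => simp [swapOn]
  | insert i s hi ih => rw [swapOn_insert hi, ← hg, ih]

theorem mixedMetric_swapOn {F : Type*} {n : ℕ} (ℓ : F → Z → ℝ) (s : Finset (Fin n))
    (p : (Fin n → Z) × (Fin n → Z)) :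
    mixedMetric ℓ (swapOn s p).1 (swapOn s p).2 = mixedMetric ℓ p.1 p.2 := by
  funext f g
  unfold mixedMetric
  congr 2
  refine Finset.sum_congr rfl fun i _ => ?_
  by_cases hi : i ∈ s <;> simp [swapOn, hi, add_comm]

theorem measurePreserving_swapOn [Fintype ι] [MeasurableSpace Z] (P : ι → Measure Z)
    [∀ i, SigmaFinite (P i)] (s : Finset ι) :
    MeasurePreserving (swapOn s) ((Measure.pi P).prod (Measure.pi P))
      ((Measure.pi P).prod (Measure.pi P)) := by
  have coordinatewise : MeasurePreserving
      (fun (q : ι → Z × Z) i => (if i ∈ s then Prod.swap else id) (q i))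
      (Measure.pi fun i => (P i).prod (P i)) (Measure.pi fun i => (P i).prod (P i)) := by
    refine measurePreserving_pi _ _ (f := fun i => if i ∈ s then Prod.swap else id) fun i => ?_
    split_ifs
    · exact Measure.measurePreserving_swap
    · exact MeasurePreserving.id _
  have transpose := measurePreserving_arrowProdEquivProdArrow Z Z ι P P
  convert! (transpose.comp coordinatewise).comp transpose.symm using 1
  funext p
  refine Prod.ext ?_ ?_ <;> funext i <;> by_cases hi : i ∈ s <;>
    simp [swapOn, hi, MeasurableEquiv.arrowProdEquivProdArrow, Equiv.arrowProdEquivProdArrow]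

theorem ofReal_le_measure_of_le_ncard {Ω κ : Type*} [MeasurableSpace Ω] [Fintype κ] [Nonempty κ]
    {μ : Measure Ω} [IsProbabilityMeasure μ] {g : κ → Ω → Ω}
    (hg : ∀ k, MeasurePreserving (g k) μ μ) {A : Set Ω} {c : ℝ}
    (hA : ∀ ω, c * Fintype.card κ ≤ {k | g k ω ∈ A}.ncard) : ENNReal.ofReal c ≤ μ A := by
  classical
  rw [← measure_toMeasurable A]
  set B := toMeasurable μ A
  have hB : MeasurableSet B := measurableSet_toMeasurable μ A
  have pointwise (ω : Ω) : ENNReal.ofReal (c * Fintype.card κ) ≤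
      ∑ k, (g k ⁻¹' B).indicator (1 : Ω → ℝ≥0∞) ω := by
    calc ENNReal.ofReal (c * Fintype.card κ) ≤ ENNReal.ofReal {k | g k ω ∈ A}.ncard :=
          ENNReal.ofReal_le_ofReal (hA ω)
      _ ≤ {k | g k ω ∈ B}.ncard := by
          rw [ENNReal.ofReal_natCast, Nat.cast_le]
          exact Set.ncard_le_ncard fun k hk => subset_toMeasurable μ A hk
      _ = ∑ k, (g k ⁻¹' B).indicator (1 : Ω → ℝ≥0∞) ω := by
          simp [Set.ncard_eq_toFinset_card', Set.indicator_apply, Finset.sum_boole]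
  have averaged : ENNReal.ofReal c * Fintype.card κ ≤ μ B * Fintype.card κ := by
    calc ENNReal.ofReal c * Fintype.card κ = ∫⁻ _, ENNReal.ofReal (c * Fintype.card κ) ∂μ := by
          simp [ENNReal.ofReal_mul']
      _ ≤ ∫⁻ ω, ∑ k, (g k ⁻¹' B).indicator (1 : Ω → ℝ≥0∞) ω ∂μ := lintegral_mono pointwise
      _ = ∑ k, μ (g k ⁻¹' B) := by
          have hgB (k : κ) : MeasurableSet (g k ⁻¹' B) := (hg k).measurable hB
          rw [lintegral_finsetSum _ fun k _ => measurable_one.indicator (hgB k)]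
          simp only [lintegral_indicator_one, hgB]
      _ = μ B * Fintype.card κ := by
          simp [(hg _).measure_preimage hB.nullMeasurableSet, mul_comm]
  exact (ENNReal.mul_le_mul_iff_left (by simp) (by simp)).1 averaged

end Swaps

section GhostSample

variable {F Z : Type*} {n : ℕ}

/-- The scaled ghost-minus-empirical loss vector of `f`. With the factor `1 / √(2 n)` the map
`f ↦ gapVector ℓ p f` is a contraction from `mixedMetric` to the Euclidean distance. -/
def gapVector (ℓ : F → Z → ℝ) (p : (Fin n → Z) × (Fin n → Z)) (f : F) : EuclideanSpace ℝ (Fin n) :=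
  WithLp.toLp 2 fun i => (ℓ f (p.2 i) - ℓ f (p.1 i)) / √(2 * n)

theorem measurable_gapVector [MeasurableSpace F] {ℓ : F → Z → ℝ}
    (hℓ : ∀ z, Measurable fun f => ℓ f z) (p : (Fin n → Z) × (Fin n → Z)) :
    Measurable (gapVector ℓ p) :=
  (WithLp.measurable_toLp 2 _).comp <|
    measurable_pi_lambda _ fun i => ((hℓ (p.2 i)).sub (hℓ (p.1 i))).div_const _

theorem norm_gapVector_le {ℓ : F → Z → ℝ} (hb : ∀ f z, ℓ f z ∈ Set.Icc (0 : ℝ) 1)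
    (p : (Fin n → Z) × (Fin n → Z)) (f : F) : ‖gapVector ℓ p f‖ ≤ 1 := by
  rw [EuclideanSpace.norm_eq, Real.sqrt_le_one]
  calc ∑ i, ‖gapVector ℓ p f i‖ ^ 2 ≤ ∑ _ : Fin n, 1 / (n : ℝ) := by
        refine Finset.sum_le_sum fun i _ => ?_
        have ⟨_, _⟩ := hb f (p.1 i)
        have ⟨_, _⟩ := hb f (p.2 i)
        rw [gapVector, Real.norm_eq_abs, sq_abs, div_pow, Real.sq_sqrt (by positivity)]
        calc (ℓ f (p.2 i) - ℓ f (p.1 i)) ^ 2 / (2 * n) ≤ 2 / (2 * (n : ℝ)) := by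
              gcongr
              nlinarith
          _ = 1 / n := by rw [← mul_div_mul_left 1 (n : ℝ) two_ne_zero, mul_one]
    _ ≤ 1 := by simp [mul_inv_le_one]

theorem dist_gapVector_le (ℓ : F → Z → ℝ) (p : (Fin n → Z) × (Fin n → Z)) (f g : F) :
    dist (gapVector ℓ p f) (gapVector ℓ p g) ≤ mixedMetric ℓ p.1 p.2 f g := by
  rw [EuclideanSpace.dist_eq, mixedMetric, Finset.sum_div]
  refine Real.sqrt_le_sqrt (Finset.sum_le_sum fun i _ => ?_)
  simp only [gapVector, Real.dist_eq, sq_abs, ← sub_div, div_pow]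
  rw [Real.sq_sqrt (by positivity), mul_comm (2 : ℝ), ← div_div, div_right_comm]
  gcongr
  nlinarith [sq_nonneg ((ℓ f (p.1 i) - ℓ g (p.1 i)) + (ℓ f (p.2 i) - ℓ g (p.2 i)))]

theorem inner_signVector_gapVector (ℓ : F → Z → ℝ) (s : Finset (Fin n))
    (p : (Fin n → Z) × (Fin n → Z)) (f : F) :
    √2 / √n * inner ℝ (signVector s) (gapVector ℓ p f) =
      (∑ i, ℓ f ((swapOn s p).2 i)) / n - (∑ i, ℓ f ((swapOn s p).1 i)) / n := by
  have scale (x : ℝ) : √2 / √n * (x / (√2 * √n)) = x / n := by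
    rw [div_mul_div_comm, mul_left_comm, mul_div_mul_left _ _ (Real.sqrt_ne_zero'.2 two_pos),
      Real.mul_self_sqrt n.cast_nonneg]
  rw [inner_signVector, Finset.mul_sum, ← sub_div, ← Finset.sum_sub_distrib, Finset.sum_div]
  refine Finset.sum_congr rfl fun i _ => ?_
  by_cases hi : i ∈ s <;> simp [gapVector, swapOn, hi, ← neg_div, scale]

theorem le_mul_biInf_add {a b c : ℝ≥0∞} {κ : Type*} {P : κ → Prop} {u : κ → ℝ≥0∞} (hc : c ≠ 0)
    (hc' : c ≠ ∞) (h : ∀ k, P k → a ≤ c * (u k + b)) : a ≤ c * ((⨅ (k) (_ : P k), u k) + b) := by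
  rw [← ENNReal.div_le_iff' hc hc', ← tsub_le_iff_right]
  refine le_iInf₂ fun k hk => ?_
  rw [tsub_le_iff_right, ENNReal.div_le_iff' hc hc']
  exact h k hk

theorem ofReal_gap_swapOn_le [MeasurableSpace F] {ℓ : F → Z → ℝ}
    (hℓ : ∀ z, Measurable fun f => ℓ f z) (hb : ∀ f z, ℓ f z ∈ Set.Icc (0 : ℝ) 1)
    {π : Measure F} {Λ : ℝ} {p : (Fin n → Z) × (Fin n → Z)} {s : Finset (Fin n)}
    (hs : SatisfiesSignBound (π.map (gapVector ℓ p)) Λ s) (f : F) :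
    ENNReal.ofReal ((∑ i, ℓ f ((swapOn s p).2 i)) / n - (∑ i, ℓ f ((swapOn s p).1 i)) / n) ≤
      ENNReal.ofReal 40 * ((⨅ (α : ℝ) (_ : 0 ≤ α), (ENNReal.ofReal α +
        ENNReal.ofReal (1 / √n) * entropyIntegral π (mixedMetric ℓ p.1 p.2) f α √2)) +
          ENNReal.ofReal √(Λ / n)) := by
  refine le_mul_biInf_add (by simp) (by simp) fun α hα => ?_
  have hnorm : ‖gapVector ℓ p f‖ ≤ √2 :=
    (norm_gapVector_le hb p f).trans (Real.one_le_sqrt.2 one_le_two)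
  have sign_bound := hs _ hnorm α hα
  rw [Fintype.card_fin, inner_signVector_gapVector] at sign_bound
  refine sign_bound.trans ?_
  gcongr
  exact entropyIntegral_map_le (measurable_gapVector hℓ p) (dist_gapVector_le ℓ p f) _ _

theorem pointwise_generalization_via_ghost_sample_general [MeasurableSpace Z] [MeasurableSpace F]
    {ℓ : F → Z → ℝ} (hℓ : ∀ z, Measurable fun f => ℓ f z)
    (hb : ∀ f z, ℓ f z ∈ Set.Icc (0 : ℝ) 1) (hn : 1 ≤ n)
    {μ : Measure ((Fin n → Z) × (Fin n → Z))} [IsProbabilityMeasure μ]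
    (hμ : ∀ s, MeasurePreserving (swapOn s) μ μ) {π : (Fin n → Z) → (Fin n → Z) → Measure F}
    [∀ S S', IsProbabilityMeasure (π S S')]
    (hπ : ∀ S S' i, π S S' = π (Function.update S i (S' i)) (Function.update S' i (S i)))
    {δ : ℝ} (hδ : δ ∈ Set.Ioo (0 : ℝ) 1) :
    ENNReal.ofReal (1 - δ) ≤ μ {p | ∀ f : F,
      ENNReal.ofReal ((∑ i, ℓ f (p.2 i)) / n - (∑ i, ℓ f (p.1 i)) / n) ≤
        ENNReal.ofReal 40 * ((⨅ (α : ℝ) (_ : 0 ≤ α), (ENNReal.ofReal α +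
          ENNReal.ofReal (1 / √n) *
            entropyIntegral (π p.1 p.2) (mixedMetric ℓ p.1 p.2) f α √2)) +
          ENNReal.ofReal √(Real.log (Real.log (2 * n) / δ) / n))} := by
  have : Nonempty (Fin n) := ⟨⟨0, hn⟩⟩
  refine ofReal_le_measure_of_le_ncard hμ fun p => ?_
  have hν := Measure.isProbabilityMeasure_map (μ := π p.1 p.2)
    (measurable_gapVector hℓ p).aemeasurable
  have many_signs := ncard_satisfiesSignBound ((π p.1 p.2).map (gapVector ℓ p)) hδ.1 hδ.2.le
  rw [Fintype.card_fin] at many_signs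
  rw [Fintype.card_finset, Fintype.card_fin, Nat.cast_pow, Nat.cast_ofNat]
  refine many_signs.trans (Nat.cast_le.2 (Set.ncard_le_ncard fun s hs f => ?_))
  rw [apply_swapOn_eq hπ, mixedMetric_swapOn]
  exact ofReal_gap_swapOn_le hℓ hb hs f

end GhostSample

/-- **Pointwise Generalization via Ghost Sample** (swap-invariant priors). -/
theorem pointwise_generalization_via_ghost_sample :
    ∃ C : ℝ, 0 < C ∧
      ∀ (Z : Type) (_ : MeasurableSpace Z) (F : Type) (_ : MeasurableSpace F)
        (P : Measure Z), IsProbabilityMeasure P →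
        ∀ (ℓ : F → Z → ℝ), Measurable (Function.uncurry ℓ) →
        (∀ f z, ℓ f z ∈ Set.Icc (0 : ℝ) 1) →
        ∀ n : ℕ, 1 ≤ n →
        ∀ π : (Fin n → Z) → (Fin n → Z) → Measure F,
        (∀ S S', IsProbabilityMeasure (π S S')) →
        (∀ A : Set F, MeasurableSet A →
          Measurable fun p : (Fin n → Z) × (Fin n → Z) => π p.1 p.2 A) →
        (∀ (S S' : Fin n → Z) (i : Fin n),
          π S S' = π (Function.update S i (S' i)) (Function.update S' i (S i))) →
        ∀ δ : ℝ, δ ∈ Set.Ioo (0 : ℝ) 1 →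
        ENNReal.ofReal (1 - δ) ≤
          ((Measure.pi fun _ : Fin n => P).prod (Measure.pi fun _ : Fin n => P))
            {p | ∀ f : F,
              ENNReal.ofReal ((∑ i, ℓ f (p.2 i)) / n - (∑ i, ℓ f (p.1 i)) / n) ≤
                ENNReal.ofReal C *
                  ((⨅ (α : ℝ) (_ : 0 ≤ α),
                      (ENNReal.ofReal α +
                        ENNReal.ofReal (1 / Real.sqrt n) *
                          ∫⁻ ε in Set.Ioc α (Real.sqrt 2),
                            (negLog ((π p.1 p.2)
                              (mball (mixedMetric ℓ p.1 p.2) f ε))) ^ (1 / 2 : ℝ))) +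
                    ENNReal.ofReal (Real.sqrt (Real.log (Real.log (2 * n) / δ) / n)))} := by
  refine ⟨40, by norm_num, fun Z _ F _ P hP ℓ hℓ hb n hn π hπ _ hswap δ hδ => ?_⟩
  exact pointwise_generalization_via_ghost_sample_general (fun _ => hℓ.comp measurable_prodMk_right)
    hb hn (measurePreserving_swapOn fun _ => P) hswap hδ

end
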